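/- arXiv:2407.12596 — 2 statements merged into one kernel-verified Lean document; each statement's English description precedes it below -/
import Mathlib

section
/- Let p be a prime, r ∈ ℕ_{≥2}, R = ℤ/p^rℤ with maximal ideal I = pR, and let m > 2 be an integer. Then σ_{2m}(1) = 0, and for every ℓ with 1 < ℓ < r: σ_{2m}(ℓ) = p^{(2m−3)r − ℓ(m−2) + 1 − m} · (p^{m−1} − 1) · [ℓ−1]_{p^{m−2}}, where [k]_q := (q^k − 1)/(q − 1). -/
open Matrix

/-- `η(a)` is the matrix `![![a, -1], ![1, 0]]`. -/
def eta {R : Type*} [CommRing R] (a : R) : Matrix (Fin 2) (Fin 2) R := !![a, -1; 1, 0]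

/-- `[c₁, …, cₙ] = η(c₁)·η(c₂)⋯η(cₙ)`. -/
def prodEta {R : Type*} [CommRing R] {n : ℕ} (c : Fin n → R) : Matrix (Fin 2) (Fin 2) R :=
  (List.ofFn fun i => eta (c i)).prod


/-- `σ_n(ℓ) := |σ_{(-1)^(n/2)+p^ℓ, n}|`: the number of tuples `(c₁, …, cₙ) ∈ Iⁿ`
(`I = pR ⊆ R = ℤ/p^rℤ`) with `[c₁, …, cₙ] = diag(z, z⁻¹)` for `z = (-1)^(n/2) + p^ℓ`. -/
noncomputable def sigmaCount (p r n ℓ : ℕ) : ℕ :=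
  Nat.card {c : Fin n → ZMod (p ^ r) //
    (∀ i, c i ∈ Ideal.span {(p : ZMod (p ^ r))}) ∧
    prodEta c = !![(-1) ^ (n / 2) + (p : ZMod (p ^ r)) ^ ℓ, 0;
                   0, Ring.inverse ((-1) ^ (n / 2) + (p : ZMod (p ^ r)) ^ ℓ)]}

/-- The q-integer `[k]_q = 1 + q + ⋯ + q^(k-1) = (q^k - 1)/(q - 1)`. -/
def qInt (k q : ℕ) : ℕ := ∑ i ∈ Finset.range k, q ^ i

section general
open Classical in
/-- number of solutions of a bilinear equation -/
noncomputable def bilCount {R : Type*} [CommRing R] (I : Ideal R) [Fintype I] (k : ℕ) (t : R) : ℕ :=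
  ∑ y : Fin k → I, ∑ b : Fin k → I, if ∑ i, (b i : R) * (y i : R) = t then 1 else 0

open Classical in
theorem sum_fin_cons {α M : Type*} [Fintype α] [AddCommMonoid M] (n : ℕ)
    (f : (Fin (n+1) → α) → M) :
    ∑ c, f c = ∑ a, ∑ c : Fin n → α, f (Fin.cons a c) := by
  rw [← (Fin.consEquiv (fun _ => α)).sum_comp, Fintype.sum_prod_type]
  rfl

open Classical in
theorem sum_fin_snoc {α M : Type*} [Fintype α] [AddCommMonoid M] (n : ℕ)
    (f : (Fin (n+1) → α) → M) :
    ∑ c, f c = ∑ a, ∑ c : Fin n → α, f (Fin.snoc c a) := by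
  rw [← (Fin.snocEquiv (fun _ => α)).sum_comp, Fintype.sum_prod_type]
  rfl

set_option linter.unusedSectionVars false
variable {R : Type*} [CommRing R] (I : Ideal R) [Fintype I]

theorem prodEta_cons {n : ℕ} (a : I) (c : Fin n → I) :
    prodEta (fun i => ((Fin.cons a c : Fin (n+1) → I) i : R)) =
      eta (a : R) * prodEta (fun i => (c i : R)) := by
  simp [prodEta, List.ofFn_succ]

theorem prodEta_snoc {n : ℕ} (a : I) (c : Fin n → I) :
    prodEta (fun i => ((Fin.snoc c a : Fin (n+1) → I) i : R)) =
      prodEta (fun i => (c i : R)) * eta (a : R) := by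
  unfold prodEta
  rw [List.ofFn_succ']
  simp

theorem bilCount_neg (k : ℕ) (t : R) : bilCount I k (-t) = bilCount I k t := by
  classical
  unfold bilCount
  refine Finset.sum_congr rfl fun y _ => ?_
  rw [← Fintype.sum_equiv (Equiv.neg (Fin k → I)) _ _ (fun _ => rfl)]
  refine Finset.sum_congr rfl fun b _ => ?_
  simp

theorem bilCount_succ (k : ℕ) (t : R) :
    bilCount I (k+1) t = ∑ y : I, ∑ b : I, bilCount I k (t - b * y) := by
  classical
  unfold bilCount
  rw [sum_fin_cons]
  refine Finset.sum_congr rfl fun y _ => ?_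
  simp_rw [sum_fin_cons (α := I) (M := ℕ) k]
  rw [Finset.sum_comm]
  refine Finset.sum_congr rfl fun b _ => ?_
  refine Finset.sum_congr rfl fun y' _ => ?_
  refine Finset.sum_congr rfl fun b' _ => ?_
  simp [Fin.sum_univ_succ, eq_sub_iff_add_eq']

open Classical in
theorem row_count (hI : ∀ x : R, IsUnit x → ∀ i ∈ I, IsUnit (x + i)) (k : ℕ) :
    ∀ (n : ℕ) (_ : n = 2 * k) (x y s : R), IsUnit x → y ∈ I →
    (∑ c : Fin n → I, if (![x, y] ᵥ* prodEta (fun i => (c i : R))) 0 = s then 1 else 0)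
      = bilCount I k (x - (-1)^k * s) := by
  induction k with
  | zero =>
    intro n hn x y s hx hy
    obtain rfl : n = 0 := by omega
    simp [bilCount, prodEta, sub_eq_zero, eq_comm]
  | succ k ih =>
    intro n hn x y s hx hy
    obtain rfl : n = 2*k+1+1 := by omega
    have e1 : ∀ (a b : I) (c : Fin (2*k) → I),
        (![x, y] ᵥ* (eta (a:R) * (eta (b:R) * prodEta (fun i => (c i : R))))) 0
        = (![-(x + -(b*(a*x+y))), -(a*x+y)] ᵥ* prodEta (fun i => (c i : R))) 0 := by
      intro a b c
      rw [← Matrix.vecMul_vecMul, ← Matrix.vecMul_vecMul]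
      congr 2
      ext i
      fin_cases i <;> simp [eta, Matrix.vecMul, dotProduct, Fin.sum_univ_two] <;> ring
    have hy' : ∀ a : I, (a:R)*x+y ∈ I := fun a => I.add_mem (I.mul_mem_right _ a.2) hy
    rw [sum_fin_cons]
    simp_rw [sum_fin_cons (α := I) (M := ℕ) (2*k), prodEta_cons, e1]
    have e2 : ∀ a b : I, (∑ c : Fin (2*k) → I,
        if (![-(x + -(b*(a*x+y))), -(a*x+y)] ᵥ* prodEta (fun i => (c i : R))) 0 = s
          then 1 else 0) = bilCount I k ((x - (-1)^(k+1) * s) - b * (a*x+y)) := by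
      intro a b
      rw [ih _ rfl _ _ _ (hI x hx _ (I.neg_mem (I.mul_mem_left _ (hy' a)))).neg (I.neg_mem (hy' a)),
        ← bilCount_neg]
      congr 1
      ring
    simp_rw [e2]
    rw [bilCount_succ]
    obtain ⟨u, rfl⟩ := hx
    let e : I ≃ I :=
      { toFun := fun a => ⟨a * u + y, hy' a⟩
        invFun := fun a => ⟨(a - y) * (u⁻¹ : Rˣ), I.mul_mem_right _ (I.sub_mem a.2 hy)⟩
        left_inv := fun a => by ext; simp
        right_inv := fun a => by ext; simp }
    exact Fintype.sum_equiv e _ _ (fun _ => rfl)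

theorem prodEta_even (k : ℕ) : ∀ (n : ℕ) (_ : n = 2 * k) (c : Fin n → I),
    prodEta (fun i => (c i : R)) 0 1 ∈ I ∧ prodEta (fun i => (c i : R)) 1 0 ∈ I := by
  induction k with
  | zero =>
    intro n hn c
    obtain rfl : n = 0 := by omega
    simp [prodEta]
  | succ k ih =>
    intro n hn c
    obtain rfl : n = 2*k+1+1 := by omega
    rw [← Fin.cons_self_tail c, ← Fin.cons_self_tail (Fin.tail c), prodEta_cons, prodEta_cons,
      ← mul_assoc]
    obtain ⟨h1, h2⟩ := ih _ rfl (Fin.tail (Fin.tail c))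
    generalize prodEta (fun i => (Fin.tail (Fin.tail c) i : R)) = Q at h1 h2 ⊢
    generalize c 0 = a
    generalize Fin.tail c 0 = b
    constructor
    · simp only [eta, Matrix.mul_apply, Fin.sum_univ_two]
      simp
      exact I.add_mem (I.mul_mem_left _ h1) (I.neg_mem (I.mul_mem_right _ a.2))
    · simp only [eta, Matrix.mul_apply, Fin.sum_univ_two]
      simp
      exact I.add_mem (I.mul_mem_right _ b.2) (I.neg_mem h2)

theorem prodEta_det {n : ℕ} (c : Fin n → R) : (prodEta c).det = 1 := by
  unfold prodEta
  rw [← Matrix.coe_detMonoidHom, map_list_prod]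
  apply List.prod_eq_one
  intro x hx
  simp only [List.mem_map, List.mem_ofFn] at hx
  obtain ⟨_, ⟨i, rfl⟩, rfl⟩ := hx
  simp [eta, Matrix.det_fin_two]

theorem sandwich (Q : Matrix (Fin 2) (Fin 2) R) (hQ : Q.det = 1) (z z' a b : R) (hz : z * z' = 1) :
    eta a * (Q * eta b) = !![z, 0; 0, z'] ↔ Q 0 0 = -z' ∧ a = -z * Q 1 0 ∧ b = z * Q 0 1 := by
  rw [Matrix.det_fin_two] at hQ
  rw [← Matrix.ext_iff]
  simp [Fin.forall_fin_two, eta, Matrix.mul_apply, Fin.sum_univ_two]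
  generalize Q 0 0 = A at *
  generalize Q 0 1 = B at *
  generalize Q 1 0 = C at *
  generalize Q 1 1 = D at *
  constructor
  · rintro ⟨⟨h1, h2⟩, h3, h4⟩
    have hA : A = -z' := by linear_combination -h4
    subst hA
    refine ⟨rfl, ?_, ?_⟩
    · linear_combination (-a) * hz + z * h2
    · linear_combination (-b) * hz - z * h3
  · rintro ⟨rfl, rfl, rfl⟩
    refine ⟨⟨?_, ?_⟩, ?_, ?_⟩
    · linear_combination (z * C * B + D) * hz + z * hQ
    · linear_combination (-C) * hz
    · linear_combination (-B) * hz
    · ring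

open Classical in
theorem total_count (hI : ∀ x : R, IsUnit x → ∀ i ∈ I, IsUnit (x + i)) (k : ℕ) (n : ℕ) (hn : n = 2*(k+1))
    (z z' : R) (hz : z * z' = 1) :
    Nat.card {c : Fin n → R // (∀ i, c i ∈ I) ∧ prodEta c = !![z, 0; 0, z']}
      = bilCount I k (1 + (-1)^k * z') := by
  obtain rfl : n = 2*k+1+1 := by omega
  let e : {c : Fin (2*k+1+1) → R // (∀ i, c i ∈ I) ∧ prodEta c = !![z, 0; 0, z']} ≃
      {c : Fin (2*k+1+1) → I // prodEta (fun i => (c i : R)) = !![z, 0; 0, z']} :=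
    { toFun := fun c => ⟨fun i => ⟨c.1 i, c.2.1 i⟩, c.2.2⟩
      invFun := fun c => ⟨fun i => c.1 i, fun i => (c.1 i).2, c.2⟩
      left_inv := fun c => rfl
      right_inv := fun c => rfl }
  rw [Nat.card_congr e, Nat.card_eq_fintype_card, Fintype.card_subtype, Finset.card_filter]
  rw [sum_fin_cons]
  simp_rw [sum_fin_snoc (α := I) (M := ℕ) (2*k), prodEta_cons, prodEta_snoc]
  have h := row_count I hI k _ rfl 1 0 (-z') isUnit_one I.zero_mem
  rw [show 1 + (-1)^k * z' = 1 - (-1)^k * -z' by ring, ← h]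
  simp_rw [sandwich _ (prodEta_det _) z z' _ _ hz]
  have : ∀ a : I, (∑ b : I, ∑ c : Fin (2*k) → I, if prodEta (fun i => (c i : R)) 0 0 = -z' ∧
      (a:R) = -z * prodEta (fun i => (c i : R)) 1 0 ∧ (b:R) = z * prodEta (fun i => (c i : R)) 0 1
      then 1 else 0) = ∑ c : Fin (2*k) → I, ∑ b : I, if prodEta (fun i => (c i : R)) 0 0 = -z' ∧
      (a:R) = -z * prodEta (fun i => (c i : R)) 1 0 ∧ (b:R) = z * prodEta (fun i => (c i : R)) 0 1
      then 1 else 0 := fun a => Finset.sum_comm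
  simp_rw [this]
  rw [Finset.sum_comm]
  refine Finset.sum_congr rfl fun c _ => ?_
  obtain ⟨h1, h2⟩ := prodEta_even I k _ rfl c
  have e0 : (![(1:R), 0] ᵥ* prodEta (fun i => (c i : R))) 0 = prodEta (fun i => (c i : R)) 0 0 := by
    simp [Matrix.vecMul, dotProduct, Fin.sum_univ_two]
  rw [e0]
  generalize prodEta (fun i => (c i : R)) = Q at *
  have ha : ∀ a : I, (a:R) = -z * Q 1 0 ↔ a = ⟨-z * Q 1 0, I.mul_mem_left _ h2⟩ := fun a => by
    rw [Subtype.ext_iff]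
  have hb : ∀ a : I, (a:R) = z * Q 0 1 ↔ a = ⟨z * Q 0 1, I.mul_mem_left _ h1⟩ := fun a => by
    rw [Subtype.ext_iff]
  simp_rw [ha, hb, ite_and]
  by_cases hq : Q 0 0 = -z' <;> simp [hq]

end general

section zmod

/-- the ideal generated by `p ^ j` -/
def idl (p r j : ℕ) : Ideal (ZMod (p^r)) := Ideal.span {(p : ZMod (p^r))^j}

theorem mem_idl {p r j : ℕ} {x : ZMod (p^r)} : x ∈ idl p r j ↔ ∃ s, x = (p : ZMod (p^r))^j * s := by
  rw [idl, Ideal.mem_span_singleton]; rfl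

theorem idl_anti (p r : ℕ) {i j : ℕ} (h : i ≤ j) : idl p r j ≤ idl p r i := by
  intro x hx
  obtain ⟨s, rfl⟩ := mem_idl.1 hx
  exact mem_idl.2 ⟨(p : ZMod (p^r))^(j-i) * s, by rw [← mul_assoc, ← pow_add]; congr 2; omega⟩

theorem card_idl (p r j : ℕ) (hp : p.Prime) (hj : j ≤ r) : Nat.card (idl p r j) = p^(r-j) := by
  have : NeZero (p^r) := ⟨pow_ne_zero _ hp.ne_zero⟩
  have h1 : (idl p r j).toAddSubgroup = AddSubgroup.zmultiples (((p^j : ℕ) : ZMod (p^r))) := by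
    ext x
    rw [Submodule.mem_toAddSubgroup, mem_idl, AddSubgroup.mem_zmultiples_iff]
    constructor
    · rintro ⟨s, rfl⟩
      exact ⟨s.val, by simp [mul_comm]⟩
    · rintro ⟨n, rfl⟩
      exact ⟨n, by simp [mul_comm]⟩
  change Nat.card (idl p r j).toAddSubgroup = _
  rw [h1, Nat.card_zmultiples, ZMod.addOrderOf_coe _ (NeZero.ne _),
    Nat.gcd_eq_right (pow_dvd_pow _ hj), Nat.pow_div hj hp.pos]

theorem exists_unit_idl {p r j : ℕ} (hp : p.Prime) {x : ZMod (p^r)}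
    (h : x ∈ idl p r j) (h' : x ∉ idl p r (j+1)) : ∃ u : (ZMod (p^r))ˣ, x = (p : ZMod (p^r))^j * u := by
  have : NeZero (p^r) := ⟨pow_ne_zero _ hp.ne_zero⟩
  obtain ⟨w, rfl⟩ := mem_idl.1 h
  by_cases hw : IsUnit w
  · obtain ⟨u, rfl⟩ := hw
    exact ⟨u, rfl⟩
  · exfalso
    rw [← ZMod.natCast_zmod_val w, ZMod.isUnit_iff_coprime] at hw
    have h2 : p ∣ w.val := by
      by_contra hc
      exact hw (((Nat.Prime.coprime_iff_not_dvd hp).2 hc).symm.pow_right r)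
    obtain ⟨q, hq⟩ := h2
    apply h'
    refine mem_idl.2 ⟨q, ?_⟩
    rw [← ZMod.natCast_zmod_val w, hq]
    push_cast; ring

theorem isUnit_add_idl {p r : ℕ} (x : ZMod (p^r)) (hx : IsUnit x) (i : ZMod (p^r))
    (hi : i ∈ idl p r 1) : IsUnit (x + i) := by
  obtain ⟨s, rfl⟩ := mem_idl.1 hi
  refine IsNilpotent.isUnit_add_left_of_commute ⟨r, ?_⟩ hx (Commute.all _ _)
  rw [pow_one, mul_pow, ← Nat.cast_pow, ZMod.natCast_self, zero_mul]

theorem not_mem_idl {p r l : ℕ} (hp : p.Prime) (hl : l < r) (u : (ZMod (p^r))ˣ) :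
    (p : ZMod (p^r))^l * u ∉ idl p r (l+1) := by
  intro h
  obtain ⟨s, hs⟩ := mem_idl.1 h
  have hu : IsUnit ((u : ZMod (p^r)) + -((p : ZMod (p^r)) * s)) :=
    isUnit_add_idl _ u.isUnit _ (mem_idl.2 ⟨-s, by ring⟩)
  have h0 : (p : ZMod (p^r))^l * ((u : ZMod (p^r)) + -((p : ZMod (p^r)) * s)) = 0 := by
    rw [mul_add, hs]; ring
  rw [hu.mul_left_eq_zero, ← Nat.cast_pow, ZMod.natCast_eq_zero_iff] at h0
  have := (Nat.pow_dvd_pow_iff_le_right hp.one_lt).1 h0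
  omega

variable (p r : ℕ) [Fintype (idl p r 1)]

open Classical in
theorem fiber_count (hp : p.Prime) (k j : ℕ) (hj : j + 1 ≤ r) (y : Fin k → idl p r 1)
    (h1 : ∀ i, (y i : ZMod (p^r)) ∈ idl p r j) (h2 : ¬ ∀ i, (y i : ZMod (p^r)) ∈ idl p r (j+1))
    (t : ZMod (p^r)) (ht : t ∈ idl p r (j+1)) :
    (∑ b : Fin k → idl p r 1, if ∑ i, (b i : ZMod (p^r)) * (y i : ZMod (p^r)) = t then 1 else 0)
      * p^(r-(j+1)) = p^((r-1)*k) := by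
  have : NeZero (p^r) := ⟨pow_ne_zero _ hp.ne_zero⟩
  let φ : (Fin k → idl p r 1) →+ ZMod (p^r) :=
    { toFun := fun b => ∑ i, (b i : ZMod (p^r)) * (y i : ZMod (p^r))
      map_zero' := by simp
      map_add' := fun a b => by simp [add_mul, Finset.sum_add_distrib] }
  have hr : φ.range = (idl p r (j+1)).toAddSubgroup := by
    apply le_antisymm
    · rintro _ ⟨b, rfl⟩
      rw [Submodule.mem_toAddSubgroup]
      simp only [φ, AddMonoidHom.coe_mk, ZeroHom.coe_mk]
      refine Ideal.sum_mem (idl p r (j+1)) fun i _ => ?_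
      obtain ⟨s, hs⟩ := mem_idl.1 (b i).2
      obtain ⟨s', hs'⟩ := mem_idl.1 (h1 i)
      rw [hs, hs']
      exact mem_idl.2 ⟨s * s', by ring⟩
    · intro x hx
      obtain ⟨s, rfl⟩ := mem_idl.1 ((Submodule.mem_toAddSubgroup _).1 hx)
      push Not at h2
      obtain ⟨i, hi⟩ := h2
      obtain ⟨u, hu⟩ := exists_unit_idl hp (h1 i) hi
      refine ⟨Pi.single i ⟨(p : ZMod (p^r)) * ((u⁻¹ : (ZMod (p^r))ˣ) * s), mem_idl.2 ⟨_, by rw [pow_one]⟩⟩, ?_⟩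
      simp only [φ, AddMonoidHom.coe_mk, ZeroHom.coe_mk]
      rw [Finset.sum_eq_single i]
      · simp only [Pi.single_eq_same]
        rw [hu]
        linear_combination (p : ZMod (p^r))^(j+1) * s * u.inv_mul
      · intro b _ hb
        simp [Pi.single_eq_of_ne hb]
      · simp
  have hk := AddSubgroup.card_mul_index φ.ker
  rw [AddSubgroup.index_ker, hr] at hk
  change _ * Nat.card (idl p r (j+1)) = _ at hk
  rw [card_idl p r _ hp hj, Nat.card_fun, card_idl p r 1 hp (by omega), Nat.card_fin, ← pow_mul] at hk
  rw [← hk, ← Finset.card_filter]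
  congr 1
  have hf := AddMonoidHom.card_fiber_eq_of_mem_range φ (x := t) (y := 0)
    (by change t ∈ φ.range; rw [hr]; exact ht) ⟨0, map_zero φ⟩
  refine hf.trans ?_
  rw [← Fintype.card_subtype, ← Nat.card_eq_fintype_card]
  rfl

open Classical in
theorem card_vec (hp : p.Prime) (k j : ℕ) (hj : j ≤ r) (hj1 : 1 ≤ j) :
    (Finset.univ.filter fun y : Fin k → idl p r 1 => ∀ i, (y i : ZMod (p^r)) ∈ idl p r j).card
      = p^((r-j)*k) := by
  let e : {y : Fin k → idl p r 1 // ∀ i, (y i : ZMod (p^r)) ∈ idl p r j} ≃ (Fin k → idl p r j) :=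
    { toFun := fun y i => ⟨y.1 i, y.2 i⟩
      invFun := fun y => ⟨fun i => ⟨y i, idl_anti p r hj1 (y i).2⟩, fun i => (y i).2⟩
      left_inv := fun y => rfl
      right_inv := fun y => rfl }
  rw [← Fintype.card_subtype, ← Nat.card_eq_fintype_card, Nat.card_congr e, Nat.card_fun,
    card_idl p r j hp hj, Nat.card_fin, ← pow_mul]

open Classical in
/-- partial count -/
noncomputable def partCount (k j : ℕ) (t : ZMod (p^r)) : ℕ :=
  ∑ y : Fin k → idl p r 1, if ∀ i, (y i : ZMod (p^r)) ∈ idl p r j then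
    ∑ b : Fin k → idl p r 1, (if ∑ i, (b i : ZMod (p^r)) * (y i : ZMod (p^r)) = t then 1 else 0)
    else 0

theorem partCount_one (k : ℕ) (t : ZMod (p^r)) :
    partCount p r k 1 t = bilCount (idl p r 1) k t := by
  unfold partCount bilCount
  refine Finset.sum_congr rfl fun y _ => ?_
  rw [if_pos fun i => (y i).2]
  congr!

theorem partCount_zero (k j : ℕ) (t : ZMod (p^r)) (ht : t ∉ idl p r (j+1)) :
    partCount p r k j t = 0 := by
  unfold partCount
  refine Finset.sum_eq_zero fun y _ => ?_
  split_ifs with h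
  · refine Finset.sum_eq_zero fun b _ => ?_
    rw [if_neg]
    rintro rfl
    apply ht
    refine Ideal.sum_mem _ fun i _ => ?_
    obtain ⟨s, hs⟩ := mem_idl.1 (b i).2
    obtain ⟨s', hs'⟩ := mem_idl.1 (h i)
    rw [hs, hs']
    exact mem_idl.2 ⟨s * s', by ring⟩
  · rfl

theorem partCount_step (hp : p.Prime) (k j X : ℕ) (hj1 : 1 ≤ j) (hj : j + 1 ≤ r) (t : ZMod (p^r))
    (ht : t ∈ idl p r (j+1)) (hX : X + (r-(j+1)) = (r-1)*k) :
    partCount p r k j t = partCount p r k (j+1) t + (p^((r-j)*k) - p^((r-(j+1))*k)) * p^X := by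
  classical
  have h : partCount p r k j t + p^((r-(j+1))*k) * p^X
      = partCount p r k (j+1) t + p^((r-j)*k) * p^X := by
    rw [← card_vec p r hp k j (by omega) hj1, ← card_vec p r hp k (j+1) hj (by omega),
      Finset.card_filter, Finset.card_filter, Finset.sum_mul, Finset.sum_mul]
    unfold partCount
    rw [← Finset.sum_add_distrib, ← Finset.sum_add_distrib]
    refine Finset.sum_congr rfl fun y _ => ?_
    by_cases h2 : ∀ i, (y i : ZMod (p^r)) ∈ idl p r (j+1)
    · have h1 : ∀ i, (y i : ZMod (p^r)) ∈ idl p r j := fun i => idl_anti p r (Nat.le_succ j) (h2 i)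
      rw [if_pos h1, if_pos h2, if_pos h1, if_pos h2]
    · by_cases h1 : ∀ i, (y i : ZMod (p^r)) ∈ idl p r j
      · rw [if_pos h1, if_neg h2, if_pos h1, if_neg h2]
        have hf := fiber_count p r hp k j hj y h1 h2 t ht
        rw [← hX, pow_add] at hf
        have := Nat.eq_of_mul_eq_mul_right (pow_pos hp.pos _) hf
        rw [this]; ring
      · rw [if_neg h1, if_neg h2, if_neg h1, if_neg h2]
  have hle : p^((r-(j+1))*k) ≤ p^((r-j)*k) :=
    Nat.pow_le_pow_right hp.pos (Nat.mul_le_mul_right _ (by omega))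
  obtain ⟨q, hq⟩ := Nat.exists_eq_add_of_le hle
  rw [hq] at h ⊢
  rw [Nat.add_sub_cancel_left]
  linarith [add_mul (p^((r-(j+1))*k)) q (p^X)]

theorem partCount_formula (hp : p.Prime) (k l e : ℕ) (hr : r = l + 1 + e) (u : (ZMod (p^r))ˣ) (d : ℕ) :
    ∀ j, 1 ≤ j → j + d = l →
    partCount p r (k+1) j ((p : ZMod (p^r))^l * u) =
      p^((l+e)*(k+1) + (e+1)*k) * (p^(k+1) - 1) * qInt d (p^k) := by
  induction d with
  | zero =>
    intro j hj hjl
    rw [partCount_zero p r _ _ _ (by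
      obtain rfl : j = l := by omega
      exact not_mem_idl hp (by omega) u)]
    simp [qInt]
  | succ d ih =>
    intro j hj hjl
    have ht : (p : ZMod (p^r))^l * u ∈ idl p r (j+1) :=
      idl_anti p r (show j + 1 ≤ l by omega) (mem_idl.2 ⟨u, rfl⟩)
    have e1 : r - (j+1) = e + d + 1 := by omega
    have e2 : r - j = e + d + 1 + 1 := by omega
    have e3 : r - 1 = l + e := by omega
    rw [partCount_step p r hp (k+1) j ((l+e)*k + j) hj (by omega) _ ht (by
      rw [e1, e3, ← hjl]; ring), ih (j+1) (by omega) (by omega), e1, e2]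
    rw [show qInt (d+1) (p^k) = qInt d (p^k) + (p^k)^d by simp [qInt, Finset.sum_range_succ]]
    rw [mul_add (p^((l+e)*(k+1) + (e+1)*k) * (p^(k+1) - 1))]
    congr 1
    rw [show (e+d+1+1)*(k+1) = (e+d+1)*(k+1) + (k+1) by ring, pow_add _ _ (k+1), ← Nat.mul_sub_one,
      ← pow_mul, mul_right_comm, mul_right_comm (p^_) (p^(k+1)-1), ← pow_add, ← pow_add]
    congr 2
    rw [← hjl]; ring

end zmod

theorem main_count (p r : ℕ) (hp : p.Prime) (k l e : ℕ) (hr : r = l + 1 + e) (hl : 1 ≤ l) :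
    sigmaCount p r (2 * (k+1+1)) l =
      p^((l+e)*(k+1) + (e+1)*k) * (p^(k+1) - 1) * qInt (l-1) (p^k) := by
  have : NeZero (p^r) := ⟨pow_ne_zero _ hp.ne_zero⟩
  have : Fintype (idl p r 1) := Fintype.ofFinite _
  have hdiv : 2 * (k+1+1) / 2 = k + 1 + 1 := by omega
  unfold sigmaCount
  rw [hdiv]
  have hz : IsUnit ((-1)^(k+1+1) + (p : ZMod (p^r))^l) :=
    isUnit_add_idl _ (isUnit_one.neg.pow _) _ (idl_anti p r hl (mem_idl.2 ⟨1, by ring⟩))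
  have hI : Ideal.span {(p : ZMod (p^r))} = idl p r 1 := by rw [idl, pow_one]
  rw [hI, total_count (idl p r 1) isUnit_add_idl (k+1) _ rfl _ _ (Ring.mul_inverse_cancel _ hz),
    ← partCount_one]
  obtain ⟨u, hu⟩ := hz
  rw [← hu, Ring.inverse_unit]
  rw [← partCount_formula p r hp k l e hr u⁻¹ (l-1) 1 le_rfl (by omega)]
  congr 1
  have h1 : (u : ZMod (p^r)) * (u⁻¹ : (ZMod (p^r))ˣ) = 1 := u.mul_inv
  rw [hu] at h1
  linear_combination -h1 

theorem stmt13 (p r : ℕ) (hp : p.Prime) (hr : 2 ≤ r) (m : ℕ) (hm : 2 < m) :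
    sigmaCount p r (2 * m) 1 = 0 ∧
    (∀ ℓ, 1 < ℓ → ℓ < r →
      sigmaCount p r (2 * m) ℓ =
        p ^ ((2 * m - 3) * r - ℓ * (m - 2) + 1 - m) * (p ^ (m - 1) - 1) *
          qInt (ℓ - 1) (p ^ (m - 2))) := by
  obtain ⟨k, rfl⟩ : ∃ k, m = k + 1 + 1 := ⟨m - 2, by omega⟩
  constructor
  · obtain ⟨e, rfl⟩ : ∃ e, r = 1 + 1 + e := ⟨r - 2, by omega⟩
    rw [main_count p _ hp k 1 e rfl le_rfl]
    simp [qInt]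
  · intro l hl hlr
    obtain ⟨e, rfl⟩ : ∃ e, r = l + 1 + e := ⟨r - (l+1), by omega⟩
    rw [main_count p _ hp k l e rfl hl.le]
    have h : (2 * (k+1+1) - 3) * (l+1+e) - l * (k+1+1-2) + 1 - (k+1+1)
        = (l+e)*(k+1) + (e+1)*k := by
      rw [show 2 * (k+1+1) - 3 = 2*k+1 by omega, show k+1+1-2 = k by omega,
        show (2*k+1)*(l+1+e) = ((l+e)*(k+1) + (e+1)*k + (k + 1)) + l*k by ring,
        Nat.add_sub_cancel]
      omega
    rw [h]
    rfl
end

section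
/- Let p be a prime, r ∈ ℕ_{≥2}, R = ℤ/p^rℤ with maximal ideal I = pR, and let m > 2 be an integer. Then σ_{2m}(r) = p^{(m−1)r} · [r−1]_{p^{m−2}} − p^{(m−1)r − 1} · [r−2]_{p^{m−2}}, where [k]_q := (q^k − 1)/(q − 1). -/
open Matrix

section partA
open scoped Classical in
noncomputable def Acnt {R : Type*} [CommRing R] (I : Ideal R) [Fintype I] (n : ℕ)
    (M : Matrix (Fin 2) (Fin 2) R) : ℕ :=
  ∑ c : Fin n → I, if prodEta (fun i => (c i : R)) = M then 1 else 0

open scoped Classical in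
noncomputable def Ecnt {R : Type*} [CommRing R] (I : Ideal R) [Fintype I] (k : ℕ) (b : R) : ℕ :=
  ∑ a : Fin k → I, ∑ c : Fin k → I, if ∑ i, (a i : R) * (c i : R) = b then 1 else 0

variable {R : Type*} [CommRing R] (I : Ideal R) [Fintype I]

lemma sum_cons {α : Type*} [Fintype α] (n : ℕ) (f : (Fin (n+1) → α) → ℕ) :
    ∑ c, f c = ∑ x, ∑ c : Fin n → α, f (Fin.cons x c) := by
  rw [← (Fin.consEquiv (fun _ : Fin (n+1) => α)).sum_comp, Fintype.sum_prod_type]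
  rfl

def Nmat (x y : R) (M : Matrix (Fin 2) (Fin 2) R) : Matrix (Fin 2) (Fin 2) R :=
  !![1, -x; y, 1 - x * y] * M

lemma Nmat_iff (x y : R) (m : ℕ) (P M : Matrix (Fin 2) (Fin 2) R) :
    eta x * (eta y * P) = (-1 : R) ^ (m+1) • M ↔ P = (-1 : R) ^ m • Nmat x y M := by
  have h1 : (!![1, -x; y, 1 - x * y] : Matrix (Fin 2) (Fin 2) R) * (eta x * eta y) = -1 := by
    ext i j
    fin_cases i <;> fin_cases j <;> simp [eta, Matrix.mul_apply, Fin.sum_univ_two] <;> ring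
  have h2 : (eta x * eta y) * (!![1, -x; y, 1 - x * y] : Matrix (Fin 2) (Fin 2) R) = -1 := by
    ext i j
    fin_cases i <;> fin_cases j <;> simp [eta, Matrix.mul_apply, Fin.sum_univ_two] <;> ring
  rw [← mul_assoc]
  constructor
  · intro h
    have := congrArg (fun X => (!![1, -x; y, 1 - x * y] : Matrix (Fin 2) (Fin 2) R) * X) h
    simp only [← mul_assoc, h1, Matrix.mul_smul, pow_succ] at this
    rw [Nmat]
    simp only [neg_one_mul, mul_neg_one, neg_smul, neg_inj] at this
    exact this
  · rintro rfl
    rw [Nmat, Matrix.mul_smul, ← mul_assoc, h2, pow_succ]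
    simp

lemma Acnt_succ (m : ℕ) (M : Matrix (Fin 2) (Fin 2) R) :
    Acnt I (2 * (m+1)) ((-1 : R) ^ (m+1) • M) =
      ∑ x : I, ∑ y : I, Acnt I (2 * m) ((-1 : R) ^ m • Nmat (x : R) (y : R) M) := by
  unfold Acnt
  rw [show 2 * (m+1) = (2 * m + 1) + 1 by ring, sum_cons]
  refine Finset.sum_congr rfl fun x _ => ?_
  rw [sum_cons]
  refine Finset.sum_congr rfl fun y _ => Finset.sum_congr rfl fun c _ => ?_
  have : prodEta (fun i => ((Fin.cons x (Fin.cons y c : Fin (2*m+1) → I) : Fin (2*m+1+1) → I) i : R)) 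
     = eta (x:R) * (eta (y:R) * prodEta (fun i => (c i : R))) := by
    simp [prodEta, List.ofFn_succ]
  rw [this]
  have hh := Nmat_iff (x:R) (y:R) m (prodEta (fun i => (c i : R))) M
  split_ifs <;> first | rfl | (exfalso; tauto)

lemma Ecnt_succ (k : ℕ) (b : R) :
    Ecnt I (k+1) b = ∑ x : I, ∑ y : I, Ecnt I k (b - (x : R) * (y : R)) := by
  unfold Ecnt
  rw [sum_cons]
  refine Finset.sum_congr rfl fun x _ => ?_
  simp_rw [sum_cons k]
  rw [Finset.sum_comm]
  refine Finset.sum_congr rfl fun y _ => Finset.sum_congr rfl fun a _ =>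
    Finset.sum_congr rfl fun c _ => ?_
  have hh : (∑ i, ((Fin.cons x a : Fin (k+1) → I) i : R) * ((Fin.cons y c : Fin (k+1) → I) i : R) = b) ↔
      (∑ i, (a i : R) * (c i : R) = b - (x : R) * (y : R)) := by
    rw [Fin.sum_univ_succ]
    simp only [Fin.cons_zero, Fin.cons_succ, eq_sub_iff_add_eq']
  split_ifs <;> first | rfl | (exfalso; tauto)

theorem Acnt_eq (hI : ∀ x ∈ I, IsUnit (1 + x)) (m : ℕ) : ∀ (M : Matrix (Fin 2) (Fin 2) R),
    M.det = 1 → M 0 1 ∈ I → M 1 0 ∈ I → M 1 1 - 1 ∈ I →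
    Acnt I (2 * (m+1)) ((-1 : R) ^ (m+1) • M) = Ecnt I m (M 1 1 - 1) := by
  classical
  induction m with
  | zero =>
    intro M hdet hb hc hd
    rw [Acnt_succ]
    rw [Matrix.det_fin_two] at hdet
    have key : ∀ x y : I, Acnt I (2 * 0) ((-1 : R) ^ 0 • Nmat (x : R) (y : R) M) =
      if x = ⟨M 0 1, hb⟩ then (if y = -⟨M 1 0, hc⟩ then (if M 1 1 = 1 then 1 else 0) else 0) else 0 := by
      intro x y
      have h0 : Acnt I (2 * 0) ((-1 : R) ^ 0 • Nmat (x : R) (y : R) M) =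
        if (1 : Matrix (Fin 2) (Fin 2) R) = Nmat (x : R) (y : R) M then 1 else 0 := by
        simp [Acnt, prodEta]
      rw [h0]
      have : (1 : Matrix (Fin 2) (Fin 2) R) = Nmat (x : R) (y : R) M ↔
        (x = ⟨M 0 1, hb⟩ ∧ y = -⟨M 1 0, hc⟩ ∧ M 1 1 = 1) := by
        rw [← Matrix.ext_iff]
        simp only [Fin.forall_fin_two, Nmat, Matrix.mul_apply, Fin.sum_univ_two, Subtype.ext_iff]
        simp
        generalize M 0 0 = a at *
        generalize M 0 1 = b at *
        generalize M 1 0 = c at *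
        generalize M 1 1 = d at *
        obtain ⟨x, hx⟩ := x
        obtain ⟨y, hy⟩ := y
        simp only
        constructor
        · rintro ⟨⟨h1, h2⟩, h3, h4⟩
          have hd1 : d = 1 := by linear_combination y * h2 - h4
          subst hd1
          refine ⟨by linear_combination h2, ?_, rfl⟩
          linear_combination y * h1 - h3 
        · rintro ⟨rfl, rfl, rfl⟩
          refine ⟨⟨?_, ?_⟩, ?_, ?_⟩ <;> grind
      simp only [this]
      split_ifs <;> simp_all
    simp only [key]
    simp [Ecnt]
    congr 1
    rw [eq_comm (a := (0 : R)), sub_eq_zero]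
  | succ m ih =>
    intro M hdet hb hc hd
    rw [Acnt_succ, Ecnt_succ]
    have hN : ∀ x y : I, Acnt I (2 * (m+1)) ((-1 : R) ^ (m+1) • Nmat (x : R) (y : R) M) =
       Ecnt I m (M 1 1 - 1 - (x * M 1 1 - M 0 1) * y) := by
      intro x y
      rw [ih]
      · congr 1
        simp [Nmat, Matrix.mul_apply, Fin.sum_univ_two]; ring
      · rw [Nmat, Matrix.det_mul, hdet, Matrix.det_fin_two]; simp
      · simp [Nmat, Matrix.mul_apply, Fin.sum_univ_two]
        exact I.add_mem hb (I.neg_mem (I.mul_mem_right _ x.2))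
      · simp [Nmat, Matrix.mul_apply, Fin.sum_univ_two]
        exact I.add_mem (I.mul_mem_right _ y.2) (I.mul_mem_left _ hc)
      · have : Nmat (x : R) (y : R) M 1 1 - 1 = (y : R) * (M 0 1 - x * M 1 1) + (M 1 1 - 1) := by
          simp [Nmat, Matrix.mul_apply, Fin.sum_univ_two]; ring
        rw [this]
        exact I.add_mem (I.mul_mem_right _ y.2) hd
    simp only [hN]
    have hu : IsUnit (M 1 1) := by simpa using hI _ hd
    let f : I → I := fun x => ⟨x * M 1 1 - M 0 1, I.sub_mem (I.mul_mem_right _ x.2) hb⟩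
    have hf : Function.Bijective f := by
      rw [← Finite.injective_iff_bijective]
      intro x y h
      simp only [f, Subtype.mk.injEq, sub_left_inj] at h
      exact Subtype.ext (hu.mul_right_cancel h)
    exact hf.sum_comp (fun x : I => ∑ y : I, Ecnt I m (M 1 1 - 1 - (x : R) * y))
end partA
section partB
/-- multiplication by `p` from `ZMod (p^s)` to `ZMod (p^(s+1))` -/
noncomputable def muP (p s : ℕ) : ZMod (p ^ s) →+ ZMod (p ^ (s+1)) :=
  ZMod.lift (p ^ s) ⟨(AddMonoidHom.mulLeft (p : ZMod (p ^ (s+1)))).comp (Int.castAddHom _), by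
    have : ((p ^ (s+1) : ℕ) : ZMod (p ^ (s+1))) = 0 := ZMod.natCast_self _
    simp only [AddMonoidHom.comp_apply, AddMonoidHom.coe_mulLeft, Int.coe_castAddHom]
    push_cast at this ⊢
    rw [← this]; ring⟩

noncomputable def piP (p s : ℕ) : ZMod (p ^ (s+1)) →+* ZMod (p ^ s) :=
  ZMod.castHom (pow_dvd_pow p (Nat.le_succ s)) _

lemma muP_int (p s : ℕ) (z : ℤ) : muP p s (z : ZMod (p ^ s)) = p * z := by
  simp [muP]

lemma piP_int (p s : ℕ) (z : ℤ) : piP p s (z : ZMod (p ^ (s+1))) = z := by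
  simp [piP]

lemma muP_inj (p s : ℕ) (hp : p.Prime) : Function.Injective (muP p s) := by
  rw [injective_iff_map_eq_zero]
  intro a ha
  obtain ⟨z, rfl⟩ := ZMod.intCast_surjective a
  rw [muP_int] at ha
  have h2 : (((p : ℤ) * z : ℤ) : ZMod (p ^ (s+1))) = 0 := by push_cast; exact ha
  rw [ZMod.intCast_zmod_eq_zero_iff_dvd] at h2 ⊢
  push_cast at h2 ⊢
  rw [pow_succ'] at h2
  exact (mul_dvd_mul_iff_left (by exact_mod_cast hp.ne_zero)).1 h2

lemma muP_mul (p s : ℕ) (a : ZMod (p ^ s)) (c : ZMod (p ^ (s+1))) :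
    muP p s a * c = muP p s (a * piP p s c) := by
  obtain ⟨z, rfl⟩ := ZMod.intCast_surjective a
  obtain ⟨w, rfl⟩ := ZMod.intCast_surjective c
  rw [piP_int, ← Int.cast_mul, muP_int, muP_int]
  push_cast; ring

lemma piP_muP (p s : ℕ) (a : ZMod (p ^ (s+1))) : piP p (s+1) (muP p (s+1) a) = muP p s (piP p s a) := by
  obtain ⟨z, rfl⟩ := ZMod.intCast_surjective a
  rw [piP_int, muP_int, muP_int]
  simp

lemma mem_span_iff (p s : ℕ) (x : ZMod (p ^ (s+1))) :
    x ∈ Ideal.span {(p : ZMod (p ^ (s+1)))} ↔ ∃ a, muP p s a = x := by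
  rw [Ideal.mem_span_singleton']
  constructor
  · rintro ⟨a, rfl⟩
    obtain ⟨z, rfl⟩ := ZMod.intCast_surjective a
    exact ⟨z, by rw [muP_int, mul_comm]⟩
  · rintro ⟨a, rfl⟩
    obtain ⟨z, rfl⟩ := ZMod.intCast_surjective a
    exact ⟨z, by rw [muP_int, mul_comm]⟩

/-- fibers of surjective homs -/
lemma card_fiber {A B : Type*} [AddGroup A] [AddGroup B] [Finite A] [Finite B] (f : A →+ B)
    (hf : Function.Surjective f) (b : B) :
    Nat.card {a // f a = b} = Nat.card f.ker := by
  obtain ⟨a0, rfl⟩ := hf b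
  refine Nat.card_congr ⟨fun a => ⟨a.1 - a0, ?_⟩, fun a => ⟨a.1 + a0, ?_⟩, ?_, ?_⟩
  · rw [AddMonoidHom.mem_ker, map_sub, a.2, sub_self]
  · rw [map_add, a.2, zero_add]
  · intro a; simp
  · intro a; simp

lemma card_pre {A B : Type*} [AddGroup A] [AddGroup B] [Finite A] [Finite B] (f : A →+ B)
    (hf : Function.Surjective f) (P : B → Prop) :
    Nat.card {a // P (f a)} * Nat.card B = Nat.card A * Nat.card {b // P b} := by
  have h : ∀ P : B → Prop, Nat.card {a // P (f a)} = Nat.card {b // P b} * Nat.card f.ker := by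
    intro P
    have e : {a // P (f a)} ≃ Σ b : {b // P b}, {a // f a = b} :=
      ⟨fun a => ⟨⟨f a.1, a.2⟩, ⟨a.1, rfl⟩⟩, fun x => ⟨x.2.1, by rw [x.2.2]; exact x.1.2⟩,
        fun a => rfl, fun ⟨⟨b, hb⟩, ⟨a, ha⟩⟩ => by cases ha; rfl⟩
    have := Fintype.ofFinite {b // P b}
    rw [Nat.card_congr e, Nat.card_sigma]
    simp [card_fiber f hf]
  have h1 := h (fun _ => True)
  have e1 := Nat.card_congr (Equiv.subtypeUnivEquiv (α := A) (p := fun _ => True) (fun _ => trivial))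
  have e2 := Nat.card_congr (Equiv.subtypeUnivEquiv (α := B) (p := fun _ => True) (fun _ => trivial))
  rw [e1, e2] at h1
  rw [h P, h1]; ring

noncomputable def Qc (p k s : ℕ) : ℕ :=
  Nat.card {x : (Fin k → ZMod (p ^ s)) × (Fin k → ZMod (p ^ s)) // ∑ i, x.1 i * x.2 i = 0}

noncomputable def piV (p k s : ℕ) : (Fin k → ZMod (p ^ (s+1))) →+ (Fin k → ZMod (p ^ s)) :=
  (piP p s).toAddMonoidHom.compLeft (Fin k)

lemma piP_surj (p s : ℕ) : Function.Surjective (piP p s) := ZMod.ringHom_surjective _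

lemma piV_surj (p k s : ℕ) : Function.Surjective (piV p k s) := fun y =>
  ⟨fun i => (piP_surj p s (y i)).choose, funext fun i => (piP_surj p s (y i)).choose_spec⟩

lemma Qc_zero (p k : ℕ) : Qc p k 0 = 1 := by
  unfold Qc
  have : Subsingleton (ZMod (p ^ 0)) := by rw [pow_zero]; infer_instance
  rw [Nat.card_eq_one_iff_unique]
  refine ⟨inferInstance, ⟨⟨0, Subsingleton.elim _ _⟩⟩⟩

lemma notMem_unit (p s : ℕ) (hp : p.Prime) (x : ZMod (p ^ (s+1)))
    (hx : ¬ ∃ a, muP p s a = x) : IsUnit x := by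
  have := NeZero.mk hp.ne_zero
  obtain ⟨n, rfl⟩ := ZMod.natCast_zmod_surjective x
  rw [ZMod.isUnit_iff_coprime]
  apply Nat.Coprime.pow_right
  rw [Nat.coprime_comm, hp.coprime_iff_not_dvd]
  rintro ⟨m, rfl⟩
  exact hx ⟨((m : ℤ) : ZMod (p ^ s)), by rw [muP_int]; push_cast; rfl⟩

lemma Qc_succ (p k s : ℕ) (hp : p.Prime) :
    Qc p (k+1) (s+1) + p ^ ((s+1) * k) * p ^ (s * (k+1)) =
     p ^ ((s+1) * k) * p ^ ((s+1) * (k+1)) + p ^ (k+1) * Qc p (k+1) s := by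
  classical
  have := NeZero.mk hp.ne_zero
  have hZ : ∀ k s, Nat.card (Fin k → ZMod (p ^ s)) = p ^ (s * k) := by
    intro k s; rw [Nat.card_fun]; simp [pow_mul]
  set V := Fin (k+1) → ZMod (p ^ (s+1)) with hV
  set W := Fin (k+1) → ZMod (p ^ s) with hW
  let K : V → ℕ := fun a => Nat.card {c : V // ∑ i, a i * c i = 0}
  have e : Qc p (k+1) (s+1) = ∑ a : V, K a := by
    unfold Qc
    rw [Nat.card_congr (Equiv.subtypeProdEquivSigmaSubtype
      (fun (a c : V) => ∑ i, a i * c i = 0)), Nat.card_sigma]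
  let μ : W → V := fun a i => muP p s (a i)
  have hμ : Function.Injective μ := fun a b h => funext fun i => muP_inj p s hp (congrFun h i)
  have hunit : ∀ a : V, a ∉ Finset.univ.image μ → K a = p ^ ((s+1) * k) := by
    intro a ha
    have : ∃ i, IsUnit (a i) := by
      by_contra hcon
      push Not at hcon
      apply ha
      have h2 : ∀ i, ∃ b, muP p s b = a i := fun i => by
        by_contra h; exact hcon i (notMem_unit p s hp _ h)
      choose b hb using h2
      simp only [Finset.mem_image, Finset.mem_univ, true_and]
      exact ⟨b, funext hb⟩
    obtain ⟨i, u, hu⟩ := this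
    let f : V →+ ZMod (p ^ (s+1)) :=
      AddMonoidHom.mk' (fun c => ∑ i, a i * c i) (fun x y => by
        change ∑ i, a i * (x i + y i) = ∑ i, a i * x i + ∑ i, a i * y i
        rw [← Finset.sum_add_distrib]
        exact Finset.sum_congr rfl fun i _ => mul_add _ _ _)
    have hf : Function.Surjective f := by
      intro y
      refine ⟨Pi.single i (↑u⁻¹ * y), ?_⟩
      change ∑ j, a j * (Pi.single i (↑u⁻¹ * y) : V) j = y
      rw [Finset.sum_eq_single i]
      · simp [← hu]
      · intro j _ hj; simp [hj]
      · simp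
    have h := card_pre f hf (fun x => x = 0)
    have h3 : Nat.card {b : ZMod (p ^ (s+1)) // b = 0} = 1 := by simp
    rw [h3, hZ, Nat.card_zmod, mul_one] at h
    have h4 : p ^ ((s+1) * (k+1)) = p ^ ((s+1) * k) * p ^ (s+1) := by ring
    rw [h4] at h
    exact Nat.eq_of_mul_eq_mul_right (pow_pos hp.pos _) h
  have himg : ∑ b : W, K (μ b) = p ^ (k+1) * Qc p (k+1) s := by
    unfold Qc
    rw [Nat.card_congr (Equiv.subtypeProdEquivSigmaSubtype
      (fun (a c : W) => ∑ i, a i * c i = 0)), Nat.card_sigma, Finset.mul_sum]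
    refine Finset.sum_congr rfl fun b _ => ?_
    have h := card_pre (piV p (k+1) s) (piV_surj p (k+1) s) (fun c : W => ∑ i, b i * c i = 0)
    have h2 : K (μ b) = Nat.card {c : V // ∑ i, b i * (piV p (k+1) s c) i = 0} := by
      refine Nat.card_congr (Equiv.subtypeEquivRight fun c => ?_)
      simp only [μ, muP_mul]
      rw [← map_sum, map_eq_zero_iff _ (muP_inj p s hp)]
      rfl
    rw [h2]
    rw [hZ, hZ] at h
    refine Nat.eq_of_mul_eq_mul_right (pow_pos hp.pos (s * (k+1))) (h.trans ?_)
    ring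
  have hsplit := Finset.sum_add_sum_compl (Finset.univ.image μ) K
  rw [Finset.sum_image (fun a _ b _ h => hμ h), himg,
    Finset.sum_congr rfl (fun a ha => hunit a (Finset.mem_compl.1 ha)), Finset.sum_const,
    ← e, smul_eq_mul] at hsplit
  have hc := Finset.card_add_card_compl (Finset.univ.image μ)
  rw [Finset.card_image_of_injective _ hμ, Finset.card_univ, ← Nat.card_eq_fintype_card, hZ,
    ← Nat.card_eq_fintype_card, hZ] at hc
  rw [← hsplit, ← hc]
  ring

lemma Qc_formula (p j : ℕ) (hp : p.Prime) (s : ℕ) :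
    p * Qc p (j+1) s + p ^ ((j+1) * s) * qInt s (p ^ j) =
      p ^ ((j+1) * s + 1) * qInt (s+1) (p ^ j) := by
  induction s with
  | zero => simp [Qc_zero, qInt]
  | succ s ih =>
    have h := Qc_succ p j s hp
    have q1 : ∀ n, qInt (n+1) (p ^ j) = qInt n (p ^ j) + (p ^ j) ^ n := fun n =>
      Finset.sum_range_succ _ _
    rw [q1 (s+1)]
    rw [q1 s] at ih ⊢
    zify at *
    have e1 : ((p:ℤ) ^ j) ^ s = p ^ (j * s) := by rw [pow_mul]
    linear_combination (p : ℤ) * h + (p:ℤ) ^ (j+1) * ih 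
end partB
section partC
lemma Ecnt_eq_Qc (p k s : ℕ) (hp : p.Prime)
    [Fintype (Ideal.span {(p : ZMod (p ^ (s+2)))})] :
    Ecnt (Ideal.span {(p : ZMod (p ^ (s+2)))}) k 0 = p ^ (2 * k) * Qc p k s := by
  classical
  have := NeZero.mk hp.ne_zero
  have hZ : ∀ k s, Nat.card (Fin k → ZMod (p ^ s)) = p ^ (s * k) := by
    intro k s; rw [Nat.card_fun]; simp [pow_mul]
  let e0 : ZMod (p ^ (s+1)) ≃ Ideal.span {(p : ZMod (p ^ (s+2)))} :=
    Equiv.ofBijective (fun a => ⟨muP p (s+1) a, (mem_span_iff p (s+1) _).2 ⟨a, rfl⟩⟩)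
      ⟨fun a b h => muP_inj p (s+1) hp (congrArg Subtype.val h),
       fun x => by
        obtain ⟨a, ha⟩ := (mem_span_iff p (s+1) _).1 x.2
        exact ⟨a, Subtype.ext ha⟩⟩
  let e : (Fin k → ZMod (p ^ (s+1))) ≃ (Fin k → Ideal.span {(p : ZMod (p ^ (s+2)))}) :=
    Equiv.arrowCongr (Equiv.refl _) e0
  have he : ∀ a i, ((e a i : _) : ZMod (p ^ (s+2))) = muP p (s+1) (a i) := fun a i => rfl
  have h1 : Ecnt (Ideal.span {(p : ZMod (p ^ (s+2)))}) k 0 =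
     Nat.card {x : (Fin k → ZMod (p ^ (s+1))) × (Fin k → ZMod (p ^ (s+1))) //
        ∑ i, ((piV p k s).prodMap (piV p k s) x).1 i * ((piV p k s).prodMap (piV p k s) x).2 i = 0} := by
    unfold Ecnt
    rw [Nat.card_eq_fintype_card, Fintype.card_subtype, Finset.card_filter, Fintype.sum_prod_type,
      ← e.sum_comp]
    refine Finset.sum_congr rfl fun a _ => ?_
    rw [← e.sum_comp]
    refine Finset.sum_congr rfl fun c _ => ?_
    have hh : (∑ i, ((e a i : _) : ZMod (p ^ (s+2))) * ((e c i : _) : ZMod (p ^ (s+2))) = 0) ↔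
        ∑ i, ((piV p k s).prodMap (piV p k s) (a, c)).1 i *
          ((piV p k s).prodMap (piV p k s) (a, c)).2 i = 0 := by
      have hm : ∀ x y, x * muP p s y = muP p s (piP p s x * y) := fun x y => by
        rw [mul_comm, muP_mul, mul_comm]
      simp only [he, muP_mul, piP_muP]
      rw [← map_sum, map_eq_zero_iff _ (muP_inj p (s+1) hp)]
      simp only [hm]
      rw [← map_sum, map_eq_zero_iff _ (muP_inj p s hp)]
      rfl
    split_ifs <;> first | rfl | (exfalso; tauto)
  have h2 := card_pre ((piV p k s).prodMap (piV p k s))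
    ((piV_surj p k s).prodMap (piV_surj p k s)) (fun x => ∑ i, x.1 i * x.2 i = 0)
  rw [← h1, Nat.card_prod, Nat.card_prod, hZ, hZ] at h2
  refine Nat.eq_of_mul_eq_mul_right (Nat.mul_pos (pow_pos hp.pos (s * k)) (pow_pos hp.pos (s * k)))
    (h2.trans ?_)
  change _ * Qc p k s = _
  ring

lemma sigma_eq (p s m : ℕ) (hp : p.Prime) :
    sigmaCount p (s+2) (2 * (m+1)) (s+2) = p ^ (2 * m) * Qc p m s := by
  classical
  have := NeZero.mk hp.ne_zero
  have hfin : Finite (Ideal.span {(p : ZMod (p ^ (s+2)))}) := inferInstance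
  have := Fintype.ofFinite (Ideal.span {(p : ZMod (p ^ (s+2)))})
  have hz : (p : ZMod (p ^ (s+2))) ^ (s+2) = 0 := by
    exact_mod_cast ZMod.natCast_self (p ^ (s+2))
  have hu : ∀ x ∈ Ideal.span {(p : ZMod (p ^ (s+2)))}, IsUnit (1 + x) := by
    intro x hx
    apply IsNilpotent.isUnit_one_add
    obtain ⟨a, rfl⟩ := Ideal.mem_span_singleton'.1 hx
    exact ⟨s+2, by rw [mul_pow, hz, mul_zero]⟩
  have h := Acnt_eq (Ideal.span {(p : ZMod (p ^ (s+2)))}) hu m 1 (by simp) (by simp) (by simp)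
    (by simp)
  rw [Matrix.one_apply_eq, sub_self, Ecnt_eq_Qc p m s hp] at h
  rw [← h]
  have hinv : Ring.inverse ((-1 : ZMod (p ^ (s+2))) ^ (m+1)) = (-1) ^ (m+1) := by
    have h1 : (-1 : ZMod (p ^ (s+2))) ^ (m+1) * (-1) ^ (m+1) = 1 := by
      rw [← mul_pow]; simp
    exact Ring.inverse_unit (⟨(-1) ^ (m+1), (-1) ^ (m+1), h1, h1⟩ : (ZMod (p ^ (s+2)))ˣ)
  have hM : (!![(-1) ^ (2 * (m+1) / 2) + (p : ZMod (p ^ (s+2))) ^ (s+2), 0;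
       0, Ring.inverse ((-1) ^ (2 * (m+1) / 2) + (p : ZMod (p ^ (s+2))) ^ (s+2))] :
       Matrix (Fin 2) (Fin 2) (ZMod (p ^ (s+2)))) = (-1 : ZMod (p ^ (s+2))) ^ (m+1) • 1 := by
    rw [hz, add_zero, Nat.mul_div_cancel_left _ (by norm_num), hinv]
    ext i j
    fin_cases i <;> fin_cases j <;> simp
  unfold sigmaCount Acnt
  rw [hM]
  have hs : (∑ c : Fin (2 * (m+1)) → Ideal.span {(p : ZMod (p ^ (s+2)))},
      if prodEta (fun i => (c i : ZMod (p ^ (s+2)))) = (-1 : ZMod (p ^ (s+2))) ^ (m+1) • 1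
      then 1 else 0) = Nat.card {c : Fin (2 * (m+1)) → Ideal.span {(p : ZMod (p ^ (s+2)))} //
      prodEta (fun i => (c i : ZMod (p ^ (s+2)))) = (-1 : ZMod (p ^ (s+2))) ^ (m+1) • 1} := by
    rw [Nat.card_eq_fintype_card, Fintype.card_subtype, Finset.card_filter]
  refine Eq.trans ?_ (hs.symm.trans (Finset.sum_congr rfl fun c _ => by split_ifs <;> rfl))
  refine Nat.card_congr ⟨fun c => ⟨fun i => ⟨c.1 i, c.2.1 i⟩, c.2.2⟩,
    fun c => ⟨fun i => c.1 i, fun i => (c.1 i).2, c.2⟩, fun c => rfl, fun c => rfl⟩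
end partC

/-- For `m > 2`:
`σ_{2m}(r) = p^((m-1)r) · [r-1]_{p^(m-2)} - p^((m-1)r - 1) · [r-2]_{p^(m-2)}`. -/
theorem stmt14 (p r : ℕ) (hp : p.Prime) (hr : 2 ≤ r) (m : ℕ) (hm : 2 < m) :
    sigmaCount p r (2 * m) r =
      p ^ ((m - 1) * r) * qInt (r - 1) (p ^ (m - 2)) -
        p ^ ((m - 1) * r - 1) * qInt (r - 2) (p ^ (m - 2)) := by
  obtain ⟨s, rfl⟩ := Nat.exists_eq_add_of_le' hr
  obtain ⟨j, rfl⟩ : ∃ j, m = j + 2 := ⟨m - 2, by omega⟩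
  rw [show 2 * (j + 2) = 2 * ((j+1) + 1) by ring, sigma_eq p s (j+1) hp]
  have h := Qc_formula p j hp s
  rw [show j + 2 - 1 = j + 1 by omega, show s + 2 - 1 = s + 1 by omega,
    show s + 2 - 2 = s by omega, show j + 2 - 2 = j by omega]
  have e1 : p ^ ((j+1) * (s+2)) = p * p ^ ((j+1) * (s+2) - 1) := by
    rw [← pow_succ']
    have : 0 < (j+1) * (s+2) := by positivity
    rw [Nat.sub_add_cancel this]
  apply Nat.eq_sub_of_add_eq
  apply Nat.eq_of_mul_eq_mul_left hp.pos
  rw [mul_add, ← mul_assoc p (p ^ ((j+1) * (s+2) - 1)), ← e1]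
  linear_combination p ^ (2 * (j+1)) * h
end
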